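/- arXiv:1111.0475 — 6 statements merged into one kernel-verified Lean document; each statement's English description precedes it below -/
import Mathlib

section
/- Let ω = e^{2πi/3} and let U be the 5×5 complex matrix U = (1/2)·[[0,1,1,1,1],[1,0,1,ω,ω²],[1,1,0,ω²,ω],[1,ω,ω²,0,1],[1,ω²,ω,1,0]] (rows and columns indexed by 0,…,4). Then U is unitary. -/
/-!
Every entry of `Uᴴ * U` is a quarter of a polynomial in `ω` and its conjugate. Since `ω` is a
primitive cube root of unity, its conjugate is `ω²`, `ω³ = 1`, and `1 + ω + ω² = 0`; modulo these
relations a diagonal entry is a sum of four ones over four, and an off-diagonal entry is a multiple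
of `1 + ω + ω²`.
-/

/-- With `ω = e^{2πi/3}`, the `5 × 5` matrix
`U = (1/2)·[[0,1,1,1,1],[1,0,1,ω,ω²],[1,1,0,ω²,ω],[1,ω,ω²,0,1],[1,ω²,ω,1,0]]` is unitary. -/
theorem exact2_matrix_unitary (ω : ℂ) (hω : ω = Complex.exp (2 * Real.pi * Complex.I / 3))
    (U : Matrix (Fin 5) (Fin 5) ℂ)
    (hU : U = (1 / 2 : ℂ) •
      !![0, 1, 1, 1, 1;
         1, 0, 1, ω, ω ^ 2;
         1, 1, 0, ω ^ 2, ω;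
         1, ω, ω ^ 2, 0, 1;
         1, ω ^ 2, ω, 1, 0]) :
    U.conjTranspose * U = 1 := by
  have hprim : IsPrimitiveRoot ω 3 := by
    rw [hω]
    exact_mod_cast Complex.isPrimitiveRoot_exp 3 (by norm_num)
  have h3 : ω ^ 3 = 1 := hprim.pow_eq_one
  have hsum : 1 + ω + ω ^ 2 = 0 := by
    simpa [Finset.sum_range_succ] using hprim.geom_sum_eq_zero (by norm_num)
  -- `ω` lies on the unit circle, so its conjugate is its inverse `ω²`.
  have hconj : (starRingEnd ℂ) ω = ω ^ 2 := by
    have hnorm : ‖ω‖ = 1 := Complex.norm_eq_one_of_pow_eq_one h3 (by norm_num)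
    rw [← Complex.inv_eq_conj hnorm]
    exact inv_eq_of_mul_eq_one_right (by rw [← h3]; ring)
  have hconj_two : (starRingEnd ℂ) 2 = 2 := Complex.conj_ofNat 2
  subst hU
  ext i j
  fin_cases i <;> fin_cases j <;>
    simp [Matrix.mul_apply, Fin.sum_univ_succ, Matrix.one_apply, hconj, hconj_two] <;>
    grind
end

section
/- Let S be a subspace (subgroup) of 𝔽₂ⁿ and let k be a nonnegative integer. Then the following are equivalent: (i) there exists a function w : 𝔽₂ⁿ → ℝ with w(s) ≥ 0 for all s, w not identically zero, w(s) = 0 whenever |s| > k, and ∑_{s ∈ 𝔽₂ⁿ} (−1)^{s·z} w(s) = 0 for every z ∉ S; (ii) there exists t ∈ 𝔽₂ⁿ such that every element s of the coset t + S^⊥ has Hamming weight |s| ≤ k. (This is the combinatorial core of the characterisation Q_E^{na}(f) = min_x d(x, S_f^⊥) of nonadaptive exact quantum query complexity.) -/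
/-!
The condition on `w` says that its Walsh transform `z ↦ ∑ s, (-1)^(s·z) w(s)` is supported on `S`,
which is the same as `w` being invariant under translation by `S^⊥`.

If the transform vanishes off `S`, then Walsh inversion (`walsh_inversion`) shows
`w (a + u) = w a` for `u ∈ S^⊥`, because `(-1)^(u·z) = 1` for the `z ∈ S` that contribute. Hence the
support of `w` contains the whole coset `t + S^⊥` of any point `t` where `w` does not vanish.
Conversely, the indicator of `t + S^⊥` has transform vanishing off `S`: for `z ∉ S` there is
`u ∈ S^⊥` with `u·z = 1` (`exists_perp_dot_eq_one`, i.e. `S^⊥⊥ ⊆ S`), and translation by `u`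
preserves the coset and flips every sign.
-/

/-- The nontrivial character `x ↦ (-1)^x` of `𝔽₂`. -/
noncomputable def sgn (x : ZMod 2) : ℝ := (-1 : ℝ) ^ x.val

lemma sgn_zero : sgn 0 = 1 := by simp [sgn]

lemma sgn_one : sgn 1 = -1 := by simp [sgn, ZMod.val_one]

lemma zmod2_cases (x : ZMod 2) : x = 0 ∨ x = 1 := by
  revert x; decide

lemma sgn_add (x y : ZMod 2) : sgn (x + y) = sgn x * sgn y := by
  have h : (1 + 1 : ZMod 2) = 0 := by decide
  rcases zmod2_cases x with rfl | rfl <;> rcases zmod2_cases y with rfl | rfl <;>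
    simp [sgn_zero, sgn_one, h]

lemma zmod2_vec_add_self {n : ℕ} (v : Fin n → ZMod 2) : v + v = 0 := by
  funext i
  exact CharTwo.add_self_eq_zero (v i)

lemma sum_eq_zero_of_flip {n : ℕ} (g : (Fin n → ZMod 2) → ℝ) (e : Fin n → ZMod 2)
    (h : ∀ z, g (z + e) = -g z) : ∑ z, g z = 0 := by
  have h1 : ∑ z, g (z + e) = ∑ z, g z := Equiv.sum_comp (Equiv.addRight e) g
  simp only [h, Finset.sum_neg_distrib] at h1
  linarith

/-- Orthogonality of characters: a nonzero `v` gives a nontrivial character `z ↦ (-1)^(v·z)`. -/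
lemma sum_sgn_dot_eq_zero {n : ℕ} (v : Fin n → ZMod 2) (hv : v ≠ 0) :
    ∑ z : Fin n → ZMod 2, sgn (v ⬝ᵥ z) = 0 := by
  obtain ⟨i, hi⟩ := Function.ne_iff.mp hv
  have hi1 : v i = 1 := (zmod2_cases (v i)).resolve_left hi
  refine sum_eq_zero_of_flip _ (Pi.single i 1) fun z => ?_
  rw [dotProduct_add, sgn_add, dotProduct_single, hi1, mul_one, sgn_one]
  ring

lemma walsh_inversion {n : ℕ} (w : (Fin n → ZMod 2) → ℝ) (a : Fin n → ZMod 2) :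
    ∑ z : Fin n → ZMod 2, sgn (a ⬝ᵥ z) * ∑ s, sgn (s ⬝ᵥ z) * w s
      = Fintype.card (Fin n → ZMod 2) * w a := by
  simp only [Finset.mul_sum]
  rw [Finset.sum_comm, Finset.sum_eq_single a]
  · have : ∀ z : Fin n → ZMod 2, sgn (a ⬝ᵥ z) * (sgn (a ⬝ᵥ z) * w a) = w a := fun z => by
      rw [← mul_assoc, ← sgn_add, CharTwo.add_self_eq_zero, sgn_zero, one_mul]
    simp only [this, Finset.sum_const, nsmul_eq_mul, Finset.card_univ]
  · intro s _ hs
    have hne : a + s ≠ 0 := fun h => hs <| by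
      calc s = (a + a) + s := by rw [zmod2_vec_add_self, zero_add]
        _ = a := by rw [add_assoc, h, add_zero]
    simp only [← mul_assoc, ← sgn_add, ← add_dotProduct, ← Finset.sum_mul]
    rw [sum_sgn_dot_eq_zero _ hne, zero_mul]
  · simp

/-- The inclusion `S^⊥⊥ ⊆ S`: a vector outside `S` is detected by some element of `S^⊥`, namely the
one representing a linear functional that kills `S` but not `z`. -/
lemma exists_perp_dot_eq_one {n : ℕ} (S : Submodule (ZMod 2) (Fin n → ZMod 2))
    (z : Fin n → ZMod 2) (hz : z ∉ S) :
    ∃ u : Fin n → ZMod 2, (∀ s ∈ S, u ⬝ᵥ s = 0) ∧ u ⬝ᵥ z = 1 := by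
  obtain ⟨f, hf, hS⟩ := Submodule.exists_le_ker_of_notMem hz
  have key : ∀ v, (fun i => f (Pi.single i 1)) ⬝ᵥ v = f v := fun v => by
    rw [LinearMap.pi_apply_eq_sum_univ f v, dotProduct]
    refine Finset.sum_congr rfl fun i _ => ?_
    rw [smul_eq_mul, mul_comm]
    congr 2
    funext j
    simp [Pi.single_apply, eq_comm]
  refine ⟨fun i => f (Pi.single i 1), fun s hs => ?_, ?_⟩
  · rw [key]
    exact hS hs
  · rw [key]
    exact (zmod2_cases _).resolve_left hf

/-- Let `S` be a subspace of `𝔽₂ⁿ` and `k ≥ 0`. The following are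
equivalent: (i) there is a nonnegative, not identically zero function `w : 𝔽₂ⁿ → ℝ`
supported on Hamming weight at most `k` with `∑_s (−1)^{s·z} w(s) = 0` for every `z ∉ S`;
(ii) there exists `t ∈ 𝔽₂ⁿ` such that every element of the coset `t + S^⊥` has Hamming
weight at most `k`. This is the combinatorial core of the characterisation
`Q_E^{na}(f) = min_x d(x, S_f^⊥)` of nonadaptive exact quantum query complexity. -/
theorem nonadaptive_sdp_characterisation (n k : ℕ)
    (S : Submodule (ZMod 2) (Fin n → ZMod 2)) :
    (∃ w : (Fin n → ZMod 2) → ℝ,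
      (∀ s, 0 ≤ w s) ∧ w ≠ 0 ∧ (∀ s, k < hammingNorm s → w s = 0) ∧
      ∀ z ∉ S, ∑ s : Fin n → ZMod 2,
        (-1 : ℝ) ^ (∑ i, s i * z i : ZMod 2).val * w s = 0) ↔
    (∃ t : Fin n → ZMod 2, ∀ u : Fin n → ZMod 2,
      (∀ s ∈ S, ∑ i, u i * s i = 0) → hammingNorm (t + u) ≤ k) := by
  change (∃ w : (Fin n → ZMod 2) → ℝ,
      (∀ s, 0 ≤ w s) ∧ w ≠ 0 ∧ (∀ s, k < hammingNorm s → w s = 0) ∧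
      ∀ z ∉ S, ∑ s : Fin n → ZMod 2, sgn (s ⬝ᵥ z) * w s = 0) ↔
    (∃ t : Fin n → ZMod 2, ∀ u : Fin n → ZMod 2,
      (∀ s ∈ S, u ⬝ᵥ s = 0) → hammingNorm (t + u) ≤ k)
  constructor
  · rintro ⟨w, -, hw0, hwk, hwS⟩
    obtain ⟨t, ht⟩ := Function.ne_iff.mp hw0
    refine ⟨t, fun u hu => ?_⟩
    have hinv : w (t + u) = w t := by
      have hc : (Fintype.card (Fin n → ZMod 2) : ℝ) ≠ 0 :=
        Nat.cast_ne_zero.mpr Fintype.card_ne_zero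
      apply mul_left_cancel₀ hc
      rw [← walsh_inversion, ← walsh_inversion]
      refine Finset.sum_congr rfl fun z _ => ?_
      by_cases hz : z ∈ S
      · rw [add_dotProduct, hu z hz, add_zero]
      · rw [hwS z hz, mul_zero, mul_zero]
    by_contra hk
    exact ht (hinv ▸ hwk _ (not_le.mp hk))
  · rintro ⟨t, ht⟩
    classical
    -- `s ∈ t + S^⊥` is written as `t + s ∈ S^⊥`, since `-t = t`.
    refine ⟨fun s => if ∀ x ∈ S, (t + s) ⬝ᵥ x = 0 then 1 else 0, fun s => ?_, ?_, ?_, ?_⟩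
    · dsimp only
      split_ifs <;> norm_num
    · refine Function.ne_iff.mpr ⟨t, ?_⟩
      simp [zmod2_vec_add_self]
    · intro s hs
      refine if_neg fun h => ?_
      have := ht (t + s) h
      rw [← add_assoc, zmod2_vec_add_self, zero_add] at this
      omega
    · intro z hz
      obtain ⟨u, hu, huz⟩ := exists_perp_dot_eq_one S z hz
      refine sum_eq_zero_of_flip _ u fun s => ?_
      have hiff : (∀ x ∈ S, (t + (s + u)) ⬝ᵥ x = 0) ↔ ∀ x ∈ S, (t + s) ⬝ᵥ x = 0 := by
        refine forall₂_congr fun x hx => ?_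
        rw [← add_assoc, add_dotProduct _ u, hu x hx, add_zero]
      simp only [hiff]
      rw [add_dotProduct, huz, sgn_add, sgn_one]
      ring
end

section
/- Let f : {0,1}^n → {0,1} be a boolean function satisfying f(x) = f(x̄) for all x, where x̄ denotes the bitwise complement of x. Then there exists x ∈ {0,1}^n such that d(x,y) ≤ n−1 for every y ∈ S_f^⊥; i.e., min over x of max over y ∈ S_f^⊥ of d(x,y) is at most n−1. (Equivalently, the nonadaptive exact quantum query complexity of f is at most n−1.) -/
/-!
Complement invariance says that the all-ones vector lies in `S_f`, so every `y ∈ S_f^⊥` has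
even weight. A point `x` is at distance `n` from `y` only if `y` is the complement of `x`;
choosing `x` to be the complement of a vector of odd weight therefore keeps all of `S_f^⊥` at
distance at most `n - 1`. For `n = 0` no odd vector exists, but all distances are `0`.
-/

/-- If `f : {0,1}^n → {0,1}` satisfies `f(x) = f(x̄)` for all `x` (where
`x̄` is the bitwise complement), then there exists `x` with `d(x,y) ≤ n − 1` for every
`y ∈ S_f^⊥`; i.e. `min_x max_{y ∈ S_f^⊥} d(x,y) ≤ n − 1`, so the nonadaptive exact
quantum query complexity of `f` is at most `n − 1`. Here `P` denotes `S_f^⊥`. -/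
theorem nonadaptive_at_most_n_minus_one_of_complement_invariant (n : ℕ)
    (f : (Fin n → ZMod 2) → Bool)
    (hf : ∀ x : Fin n → ZMod 2, f (fun i => x i + 1) = f x)
    (P : Finset (Fin n → ZMod 2))
    (hP : ∀ u : Fin n → ZMod 2, u ∈ P ↔
      ∀ z : Fin n → ZMod 2, (∀ x, f (x + z) = f x) → ∑ i, u i * z i = 0) :
    ∃ x : Fin n → ZMod 2, ∀ y ∈ P, hammingDist x y ≤ n - 1 := by
  rcases n with _ | n
  · exact ⟨0, fun y _ => by simpa using hammingDist_le_card_fintype (x := 0) (y := y)⟩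
  -- The complement of this `x` is the unit vector `e₀`, which has odd weight.
  · refine ⟨fun i => Pi.single (M := fun _ => ZMod 2) 0 1 i + 1, fun y hy => ?_⟩
    have hsum : ∑ i, y i = 0 := by
      simpa using (hP y).1 hy 1 hf
    by_contra hlt
    have hcard : hammingDist
        (fun i => Pi.single (M := fun _ : Fin (n + 1) => ZMod 2) 0 1 i + 1) y = n + 1 := by
      have := hammingDist_le_card_fintype
        (x := fun i => Pi.single (M := fun _ : Fin (n + 1) => ZMod 2) 0 1 i + 1) (y := y)
      simp only [Fintype.card_fin] at this
      omega
    have hne : ∀ i, Pi.single (M := fun _ : Fin (n + 1) => ZMod 2) 0 1 i + 1 ≠ y i := by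
      unfold hammingDist at hcard
      have huniv := (Finset.card_eq_iff_eq_univ _).1 (hcard.trans (Fintype.card_fin _).symm)
      intro i
      simpa using Finset.eq_univ_iff_forall.1 huniv i
    have hbit : ∀ a b : ZMod 2, a + 1 ≠ b → b = a := by decide
    have hy' : y = Pi.single 0 1 := funext fun i => hbit _ _ (hne i)
    subst hy'
    simp at hsum
end

section
/- Let f : {0,1}^n → {0,1} be a boolean function that depends on all n input bits (for every i there exists x with f(x) ≠ f(x + e_i)). Then for every x ∈ {0,1}^n there exists y ∈ S_f^⊥ with d(x,y) ≥ n/2; i.e., min over x of max over y ∈ S_f^⊥ of d(x,y) is at least ⌈n/2⌉. (Equivalently, the nonadaptive exact quantum query complexity of f is at least ⌈n/2⌉.) -/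
/-!
The proof averages over `S_f^⊥`. Since `f` depends on bit `i`, the vector `e_i` is not in `S_f`, so
some linear functional vanishes on `S_f` but not at `e_i`; its coordinate vector `w` lies in `S_f^⊥`
and has `w_i = 1` (`exists_perp_apply_eq_one`). Translation by `w` is a bijection of `S_f^⊥` that
flips bit `i`, so exactly half of the `y ∈ S_f^⊥` differ from `x` at `i`
(`two_mul_card_filter_ne`). Hence the mean of `d(x,y)` over `y ∈ S_f^⊥` is `n/2`, and some `y`
attains at least the mean.
-/

/-- The space `S_f` of periods of `f`. -/
def periods {n : ℕ} (f : (Fin n → ZMod 2) → Bool) : Submodule (ZMod 2) (Fin n → ZMod 2) :=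
  AddSubgroup.toZModSubmodule 2
    { carrier := {z | ∀ a, f (a + z) = f a}
      zero_mem' := fun a => by rw [add_zero]
      add_mem' := fun {u v} hu hv a => by rw [← add_assoc, hv, hu]
      neg_mem' := fun {u} hu a => by rw [← hu (a + -u), neg_add_cancel_right] }

theorem mem_periods {n : ℕ} {f : (Fin n → ZMod 2) → Bool} {z : Fin n → ZMod 2} :
    z ∈ periods f ↔ ∀ a, f (a + z) = f a := Iff.rfl

/-- If `e_i` is not in a subspace, then some vector orthogonal to the subspace has `i`-th bit `1`. -/
theorem exists_perp_apply_eq_one {n : ℕ} (S : Submodule (ZMod 2) (Fin n → ZMod 2)) (i : Fin n)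
    (hi : Pi.single i 1 ∉ S) :
    ∃ w : Fin n → ZMod 2, (∀ z ∈ S, ∑ j, w j * z j = 0) ∧ w i = 1 := by
  obtain ⟨φ, hφ, hS⟩ := Submodule.exists_le_ker_of_notMem hi
  refine ⟨fun j => φ (Pi.single j 1), fun z hz => ?_, ?_⟩
  · have h0 : φ z = 0 := hS hz
    rw [LinearMap.pi_apply_eq_sum_univ φ z] at h0
    rw [← h0]
    refine Finset.sum_congr rfl fun j _ => ?_
    have he : (Pi.single j 1 : Fin n → ZMod 2) = fun k => if j = k then 1 else 0 := by
      ext k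
      simp [Pi.single_apply, eq_comm]
    rw [smul_eq_mul, mul_comm, ← he]
  · exact (Fin.eq_one_of_ne_zero _ hφ)

/-- In a finite set of bit-strings closed under translation by some `w` with `w i = 1`, exactly half
of the elements differ from `x` at `i`. -/
theorem two_mul_card_filter_ne {n : ℕ} (T : Finset (Fin n → ZMod 2)) (x w : Fin n → ZMod 2)
    (i : Fin n) (hw : w i = 1) (hT : ∀ y ∈ T, y + w ∈ T) :
    2 * (T.filter fun y => x i ≠ y i).card = T.card := by
  have flip : ∀ a b : ZMod 2, a ≠ b + 1 ↔ a = b := by decide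
  have hinv : ∀ y : Fin n → ZMod 2, y + w + w = y := fun y => by
    ext j
    have key : ∀ a b : ZMod 2, a + b + b = a := by decide
    exact key _ _
  have hcard : (T.filter fun y => x i ≠ y i).card = (T.filter fun y => ¬ x i ≠ y i).card := by
    refine Finset.card_bij' (fun y _ => y + w) (fun y _ => y + w) ?_ ?_
      (fun y _ => hinv y) (fun y _ => hinv y)
    · intro y hy
      rw [Finset.mem_filter] at hy ⊢
      refine ⟨hT y hy.1, fun h => hy.2 ?_⟩
      rwa [Pi.add_apply, hw, flip] at h
    · intro y hy
      rw [Finset.mem_filter] at hy ⊢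
      refine ⟨hT y hy.1, ?_⟩
      rw [Pi.add_apply, hw, flip]
      exact not_not.mp hy.2
  have := T.card_filter_add_card_filter_not (fun y => x i ≠ y i)
  omega

/-- If `f : {0,1}^n → {0,1}` depends on all `n` input bits, then for every
`x` there exists `y ∈ S_f^⊥` with `d(x,y) ≥ n/2`; i.e. `min_x max_{y ∈ S_f^⊥} d(x,y) ≥ ⌈n/2⌉`,
so the nonadaptive exact quantum query complexity of `f` is at least `⌈n/2⌉`. -/
theorem nonadaptive_at_least_half (n : ℕ) (f : (Fin n → ZMod 2) → Bool)
    (hdep : ∀ i : Fin n, ∃ x : Fin n → ZMod 2, f (x + Pi.single i 1) ≠ f x) :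
    ∀ x : Fin n → ZMod 2, ∃ y : Fin n → ZMod 2,
      (∀ z : Fin n → ZMod 2, (∀ a, f (a + z) = f a) → ∑ i, y i * z i = 0) ∧
      n ≤ 2 * hammingDist x y := by
  classical
  intro x
  let T : Finset (Fin n → ZMod 2) :=
    Finset.univ.filter fun y => ∀ z : Fin n → ZMod 2, (∀ a, f (a + z) = f a) → ∑ i, y i * z i = 0
  have memT : ∀ y, y ∈ T ↔
      ∀ z : Fin n → ZMod 2, (∀ a, f (a + z) = f a) → ∑ i, y i * z i = 0 := fun y => by simp [T]
  have hne : T.Nonempty := ⟨0, (memT 0).2 fun z _ => by simp⟩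
  have half : ∀ i, 2 * (T.filter fun y => x i ≠ y i).card = T.card := by
    intro i
    obtain ⟨w, hw, hwi⟩ := exists_perp_apply_eq_one (periods f) i fun h => by
      obtain ⟨a, ha⟩ := hdep i
      exact ha (mem_periods.1 h a)
    refine two_mul_card_filter_ne T x w i hwi fun y hy => (memT _).2 fun z hz => ?_
    simp only [Pi.add_apply, add_mul, Finset.sum_add_distrib]
    rw [(memT y).1 hy z hz, hw z (mem_periods.2 hz), add_zero]
  -- Double counting of the pairs `(y, i)` with `y ∈ S_f^⊥` and `x i ≠ y i`.
  have total : ∑ y ∈ T, 2 * hammingDist x y = ∑ _y ∈ T, n := by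
    calc ∑ y ∈ T, 2 * hammingDist x y
        = ∑ y ∈ T, ∑ i, 2 * (if x i ≠ y i then 1 else 0) := by
          refine Finset.sum_congr rfl fun y _ => ?_
          rw [← Finset.mul_sum, hammingDist, Finset.card_filter]
      _ = ∑ i : Fin n, T.card := by
          rw [Finset.sum_comm]
          refine Finset.sum_congr rfl fun i _ => ?_
          rw [← Finset.mul_sum, ← Finset.card_filter, half i]
      _ = ∑ _y ∈ T, n := by simp [mul_comm]
  obtain ⟨y, hy, hle⟩ := Finset.exists_le_of_sum_le hne total.ge
  exact ⟨y, (memT y).1 hy, hle⟩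
end

section
/- Let f : {0,1}^n → {0,1} be a boolean function that depends on all n input bits, and suppose that min over x ∈ {0,1}^n of max over y ∈ S_f^⊥ of d(x,y) equals n/2. Then there exists x ∈ {0,1}^n such that d(x,y) = n/2 for every y ∈ S_f^⊥. -/
/-!
Write `S` for the subspace of periods of `f`, so that `P = S^⊥`. Since `f` depends on bit `i`, the
vector `e_i` is not in `S`, and some linear functional vanishes on `S` but not at `e_i`; this is a
`u ∈ P` with `u i = 1` (`exists_mem_perp`). Translation by `u` is an involution of `P` flipping
coordinate `i`, so exactly half of `P` differs from any given `x` at `i` (`two_mul_card_ne`).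
Summing over `i`, the average over `y ∈ P` of `d(x, y)` is `n / 2` for every `x`. For a minimizing
`x` the maximum of `d(x, y)` equals this average, so all these distances equal `n / 2`.
-/

/-- The subspace `S_f` of periods of `f`. -/
def periodSubspace {n : ℕ} (f : (Fin n → ZMod 2) → Bool) : Submodule (ZMod 2) (Fin n → ZMod 2) where
  carrier := {z | ∀ x, f (x + z) = f x}
  zero_mem' := by simp
  add_mem' := by
    intro a b ha hb x
    rw [← add_assoc, hb, ha]
  smul_mem' := by
    intro c z hz x
    have hc : c = 0 ∨ c = 1 := by
      revert c
      decide
    rcases hc with rfl | rfl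
    · simp
    · simpa using hz x

/-- If `e_i` is not a period of `f`, then some vector of `S_f^⊥` has `i`-th coordinate `1`. -/
lemma exists_mem_perp {n : ℕ} (f : (Fin n → ZMod 2) → Bool) (i : Fin n)
    (hi : ∃ x : Fin n → ZMod 2, f (x + Pi.single i 1) ≠ f x) :
    ∃ u : Fin n → ZMod 2, u i = 1 ∧
      ∀ z : Fin n → ZMod 2, (∀ x, f (x + z) = f x) → ∑ j, u j * z j = 0 := by
  have hmem : (Pi.single i 1 : Fin n → ZMod 2) ∉ periodSubspace f := by
    intro h
    obtain ⟨x, hx⟩ := hi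
    exact hx (h x)
  obtain ⟨φ, hφ, hker⟩ := Submodule.exists_le_ker_of_notMem hmem
  refine ⟨fun j => φ (Pi.single j 1), ?_, fun z hz => ?_⟩
  · have key : ∀ c : ZMod 2, c ≠ 0 → c = 1 := by decide
    exact key _ hφ
  · have h0 : φ z = 0 := hker (show z ∈ periodSubspace f from hz)
    rw [← h0, LinearMap.pi_apply_eq_sum_univ φ z]
    refine Finset.sum_congr rfl fun j _ => ?_
    rw [smul_eq_mul, mul_comm]
    congr 1
    refine congrArg φ (funext fun k => ?_)
    simp [Pi.single_apply, eq_comm]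

/-- If `P` is stable under translation by a vector `u` with `u i = 1`, then exactly half of `P`
differs from `x` at coordinate `i`. -/
lemma two_mul_card_ne {n : ℕ} (P : Finset (Fin n → ZMod 2)) (i : Fin n) (u x : Fin n → ZMod 2)
    (hu : u i = 1) (hadd : ∀ y ∈ P, y + u ∈ P) :
    2 * (P.filter (fun y => x i ≠ y i)).card = P.card := by
  have huu : ∀ y : Fin n → ZMod 2, y + u + u = y := by
    intro y
    ext j
    simp only [Pi.add_apply]
    rw [add_assoc, CharTwo.add_self_eq_zero, add_zero]
  have flip_ne : ∀ a b : ZMod 2, a ≠ b → a = b + 1 := by decide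
  have flip_eq : ∀ a b : ZMod 2, a = b → a ≠ b + 1 := by decide
  have hcard : (P.filter (fun y => x i ≠ y i)).card = (P.filter (fun y => ¬ x i ≠ y i)).card := by
    refine Finset.card_bij' (fun y _ => y + u) (fun y _ => y + u) ?_ ?_
      (fun y _ => huu y) (fun y _ => huu y)
    · intro y hy
      rw [Finset.mem_filter] at hy ⊢
      refine ⟨hadd y hy.1, not_not.2 ?_⟩
      rw [Pi.add_apply, hu]
      exact flip_ne _ _ hy.2
    · intro y hy
      rw [Finset.mem_filter] at hy ⊢
      refine ⟨hadd y hy.1, ?_⟩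
      rw [Pi.add_apply, hu]
      exact flip_eq _ _ (not_not.1 hy.2)
  have := Finset.card_filter_add_card_filter_not (s := P) (fun y => x i ≠ y i)
  omega

/-- If `f : {0,1}^n → {0,1}` depends on all `n` input bits and
`min_x max_{y ∈ S_f^⊥} d(x,y) = n/2`, then there exists `x` with `d(x,y) = n/2` for
every `y ∈ S_f^⊥`. Here `P` denotes the finite set `S_f^⊥`. -/
theorem nonadaptive_minimal_implies_equidistant (n : ℕ)
    (f : (Fin n → ZMod 2) → Bool)
    (hdep : ∀ i : Fin n, ∃ x : Fin n → ZMod 2, f (x + Pi.single i 1) ≠ f x)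
    (P : Finset (Fin n → ZMod 2))
    (hP : ∀ u : Fin n → ZMod 2, u ∈ P ↔
      ∀ z : Fin n → ZMod 2, (∀ x, f (x + z) = f x) → ∑ i, u i * z i = 0)
    (hmin : 2 * Finset.univ.inf' Finset.univ_nonempty
      (fun x : Fin n → ZMod 2 => P.sup (fun y => hammingDist x y)) = n) :
    ∃ x : Fin n → ZMod 2, ∀ y ∈ P, 2 * hammingDist x y = n := by
  obtain ⟨x, -, hx⟩ := Finset.exists_mem_eq_inf' (Finset.univ_nonempty)
    (fun x : Fin n → ZMod 2 => P.sup (fun y => hammingDist x y))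
  rw [hx] at hmin
  have hle : ∀ y ∈ P, 2 * hammingDist x y ≤ n := by
    intro y hy
    have := Finset.le_sup (f := fun y => hammingDist x y) hy
    omega
  have hhalf : ∀ i, 2 * (P.filter (fun y => x i ≠ y i)).card = P.card := by
    intro i
    obtain ⟨u, hui, hu⟩ := exists_mem_perp f i (hdep i)
    refine two_mul_card_ne P i u x hui fun y hy => (hP _).2 fun z hz => ?_
    simp only [Pi.add_apply, add_mul, Finset.sum_add_distrib]
    rw [(hP y).1 hy z hz, hu z hz, add_zero]
  -- Double counting of the pairs `(y, i)` with `x i ≠ y i`.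
  have hsum : ∑ y ∈ P, 2 * hammingDist x y = ∑ y ∈ P, n := by
    have hswap : ∑ y ∈ P, hammingDist x y = ∑ i, (P.filter (fun y => x i ≠ y i)).card := by
      simp only [hammingDist, Finset.card_filter]
      exact Finset.sum_comm
    rw [← Finset.mul_sum, hswap, Finset.mul_sum, Finset.sum_congr rfl fun i _ => hhalf i]
    simp [mul_comm]
  exact ⟨x, (Finset.sum_eq_sum_iff_of_le hle).1 hsum⟩
end

section
/- Let f : {0,1}^n → {0,1} be a symmetric boolean function, and let r(f) := min over x ∈ {0,1}^n of max over y ∈ S_f^⊥ of d(x,y). Then exactly one of the following four possibilities is true: (1) f is constant and r(f) = 0; (2) f is the PARITY function or its negation and r(f) = ⌈n/2⌉; (3) f satisfies f(x) = f(x̄) for all x but is not constant, PARITY, or the negation of PARITY, and r(f) = n−1; (4) f is none of the above and r(f) = n. (By the characterisation theorem, r(f) equals the nonadaptive exact quantum query complexity of f, so this is a tetrachotomy for Q_E^{na} of symmetric functions.) -/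
/-!
The period space `S_f` of a symmetric `f` is a linear subspace stable under permuting coordinates.
If it contains a vector that is neither zero nor all-ones, then adding to this vector a suitable
transposition of it gives some `e_i + e_j`, hence all of these by symmetry; so `f` depends only on
the parity of its argument and is constant, PARITY or its negation (`const_or_parity`).
Otherwise `S_f ⊆ {0, 1ⁿ}`, and `1ⁿ ∈ S_f` exactly when `f` is invariant under complementation.
In the four cases `S_f^⊥` is respectively `{0}`, `{0, 1ⁿ}`, the even-weight vectors, and the whole
space, and the radius of each of these sets is computed directly.
-/

/-- The period space `S_f`, a subspace of `𝔽₂ⁿ`. -/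
def periodSpace {n : ℕ} (f : (Fin n → ZMod 2) → ZMod 2) : Submodule (ZMod 2) (Fin n → ZMod 2) where
  carrier := {z | ∀ x, f (x + z) = f x}
  zero_mem' := by simp
  add_mem' := by
    intro a b ha hb x
    rw [← add_assoc, hb, ha]
  smul_mem' := by
    intro c z hz x
    have hc : c = 0 ∨ c = 1 := by revert c; decide
    rcases hc with rfl | rfl
    · simp
    · simpa using hz x

theorem mem_periodSpace {n : ℕ} {f : (Fin n → ZMod 2) → ZMod 2} {z : Fin n → ZMod 2} :
    z ∈ periodSpace f ↔ ∀ x, f (x + z) = f x := Iff.rfl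

theorem zmod_two_cases (c : ZMod 2) : c = 0 ∨ c = 1 := by revert c; decide

theorem add_self_pi {n : ℕ} (x : Fin n → ZMod 2) : x + x = 0 :=
  funext fun i => CharTwo.add_self_eq_zero (x i)

theorem hammingNorm_cast {n : ℕ} (x : Fin n → ZMod 2) :
    (hammingNorm x : ZMod 2) = ∑ i, x i := by
  have h : ∀ a : ZMod 2, (if a ≠ 0 then (1 : ZMod 2) else 0) = a := by decide
  rw [hammingNorm, Finset.card_filter]
  push_cast
  exact Finset.sum_congr rfl fun i _ => h (x i)

theorem hammingNorm_comp_perm {n : ℕ} (x : Fin n → ZMod 2) (σ : Equiv.Perm (Fin n)) :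
    hammingNorm (fun i => x (σ i)) = hammingNorm x := by
  simp only [hammingNorm, Finset.card_filter]
  exact Equiv.sum_comp σ (fun i => if x i ≠ 0 then 1 else 0)

theorem comp_perm_mem_periodSpace {n : ℕ} {f : (Fin n → ZMod 2) → ZMod 2}
    (hsym : ∀ x y : Fin n → ZMod 2, hammingNorm x = hammingNorm y → f x = f y)
    {z : Fin n → ZMod 2} (hz : z ∈ periodSpace f) (σ : Equiv.Perm (Fin n)) :
    (fun i => z (σ i)) ∈ periodSpace f := by
  intro x
  have h1 := hsym _ _ (hammingNorm_comp_perm ((fun i => x (σ.symm i)) + z) σ)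
  have h2 := hsym _ _ (hammingNorm_comp_perm x σ.symm)
  rw [hz, h2] at h1
  rw [← h1]
  congr 1
  funext i
  simp

/-- A period that is neither zero nor all-ones yields every period of the form `e_i + e_j`: the
difference of `z` and its transposition `(i j)` is `e_i + e_j` when `z i ≠ z j`. -/
theorem single_add_single_mem {n : ℕ} {f : (Fin n → ZMod 2) → ZMod 2}
    (hsym : ∀ x y : Fin n → ZMod 2, hammingNorm x = hammingNorm y → f x = f y)
    {z : Fin n → ZMod 2} (hz : z ∈ periodSpace f) {a b : Fin n} (ha : z a = 1) (hb : z b = 0)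
    (i j : Fin n) :
    (Pi.single i 1 + Pi.single j 1 : Fin n → ZMod 2) ∈ periodSpace f := by
  by_cases hij : i = j
  · subst hij
    rw [add_self_pi]
    exact zero_mem _
  have key : ∀ w : Fin n → ZMod 2, w ∈ periodSpace f → w i = 1 → w j = 0 →
      (Pi.single i 1 + Pi.single j 1 : Fin n → ZMod 2) ∈ periodSpace f := by
    intro w hw hi hj
    convert add_mem hw (comp_perm_mem_periodSpace hsym hw (Equiv.swap i j)) using 1
    funext k
    by_cases hki : k = i
    · subst hki
      simp [hi, hj, hij]
    · by_cases hkj : k = j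
      · subst hkj
        simp [hi, hj, hki]
      · simp [hki, hkj, Equiv.swap_apply_of_ne_of_ne, CharTwo.add_self_eq_zero]
  have hab : a ≠ b := by
    rintro rfl
    simp [ha] at hb
  -- A permutation carrying `i` to `a` and `j` to `b`.
  have hne : Equiv.swap i a j ≠ a := by
    intro h
    have : Equiv.swap i a j = Equiv.swap i a i := by simpa using h
    exact hij ((Equiv.swap i a).injective this).symm
  have hm := comp_perm_mem_periodSpace hsym hz
    ((Equiv.swap i a).trans (Equiv.swap (Equiv.swap i a j) b))
  refine key _ hm ?_ ?_
  · simp [Equiv.swap_apply_of_ne_of_ne hne.symm hab, ha]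
  · simp [hb]

theorem const_or_parity {n : ℕ} (hn : 1 ≤ n) {f : (Fin n → ZMod 2) → ZMod 2}
    (hall : ∀ i j : Fin n, (Pi.single i 1 + Pi.single j 1 : Fin n → ZMod 2) ∈ periodSpace f) :
    (∃ c : ZMod 2, ∀ x, f x = c) ∨ ((∀ x, f x = (hammingNorm x : ZMod 2)) ∨
      (∀ x, f x = (hammingNorm x : ZMod 2) + 1)) := by
  let o : Fin n := ⟨0, hn⟩
  -- `x` and `(∑ i, x i) • e_0` differ by a combination of the periods `e_i + e_0`.
  have h : ∀ x, f x = f (Pi.single o (hammingNorm x : ZMod 2)) := by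
    intro x
    have hm : ∑ i, x i • (Pi.single i 1 + Pi.single o 1 : Fin n → ZMod 2) ∈ periodSpace f :=
      sum_mem fun i _ => Submodule.smul_mem _ _ (hall i o)
    rw [← hm x, hammingNorm_cast]
    congr 1
    simp only [smul_add, Finset.sum_add_distrib, ← Finset.sum_smul]
    have h1 : ∑ i, x i • (Pi.single i 1 : Fin n → ZMod 2) = x := by
      funext k
      simp [Finset.sum_apply, Pi.single_apply]
    rw [h1, ← add_assoc, add_self_pi, zero_add]
    funext k
    simp [Pi.single_apply]
  have hg : ∀ g : ZMod 2 → ZMod 2, (∃ c, ∀ t, g t = c) ∨ (∀ t, g t = t) ∨ (∀ t, g t = t + 1) := by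
    decide
  rcases hg (fun t => f (Pi.single o t)) with ⟨c, hc⟩ | hc | hc
  · exact Or.inl ⟨c, fun x => by rw [h x, hc]⟩
  · exact Or.inr (Or.inl fun x => by rw [h x, hc])
  · exact Or.inr (Or.inr fun x => by rw [h x, hc])

theorem hammingDist_one {n : ℕ} (x : Fin n → ZMod 2) :
    hammingNorm x + hammingDist x 1 = n := by
  have h : ∀ a : ZMod 2, (if a ≠ 0 then 1 else 0) + (if a ≠ 1 then 1 else 0) = 1 := by decide
  simp only [hammingNorm, hammingDist, Finset.card_filter, ← Finset.sum_add_distrib, Pi.one_apply, h]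
  simp

theorem hammingDist_add_one {n : ℕ} (x : Fin n → ZMod 2) : hammingDist x (x + 1) = n := by
  simp [hammingDist]

theorem hammingDist_le {n : ℕ} (x y : Fin n → ZMod 2) : hammingDist x y ≤ n := by
  simpa using hammingDist_le_card_fintype (x := x) (y := y)

theorem radius_eq {n k : ℕ} {P : Finset (Fin n → ZMod 2)}
    (hle : ∃ x, ∀ y ∈ P, hammingDist x y ≤ k)
    (hge : ∀ x, ∃ y ∈ P, k ≤ hammingDist x y) :
    Finset.univ.inf' Finset.univ_nonempty
      (fun x : Fin n → ZMod 2 => P.sup (fun y => hammingDist x y)) = k := by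
  apply le_antisymm
  · obtain ⟨x, hx⟩ := hle
    exact (Finset.inf'_le _ (Finset.mem_univ x)).trans (Finset.sup_le hx)
  · refine Finset.le_inf' _ _ fun x _ => ?_
    obtain ⟨y, hy, hk⟩ := hge x
    exact hk.trans (Finset.le_sup (f := fun y => hammingDist x y) hy)

theorem radius_zero_one {n : ℕ} {P : Finset (Fin n → ZMod 2)} (hP : ∀ u, u ∈ P ↔ u = 0 ∨ u = 1) :
    Finset.univ.inf' Finset.univ_nonempty
      (fun x : Fin n → ZMod 2 => P.sup (fun y => hammingDist x y)) = (n + 1) / 2 := by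
  apply radius_eq
  · -- The centre is any vector of weight `⌊n/2⌋`.
    obtain ⟨s, -, hs⟩ := Finset.exists_subset_card_eq
      (s := (Finset.univ : Finset (Fin n))) (n := n / 2) (by simp; omega)
    let x : Fin n → ZMod 2 := fun i => if i ∈ s then 1 else 0
    have hx : hammingNorm x = n / 2 := by
      simp [hammingNorm, x, hs]
    have h1 := hammingDist_one x
    refine ⟨x, fun y hy => ?_⟩
    rcases (hP y).1 hy with rfl | rfl
    · rw [hammingDist_zero_right]; omega
    · omega
  · intro x
    have h1 := hammingDist_one x
    by_cases h : (n + 1) / 2 ≤ hammingNorm x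
    · exact ⟨0, (hP 0).2 (Or.inl rfl), by rwa [hammingDist_zero_right]⟩
    · exact ⟨1, (hP 1).2 (Or.inr rfl), by omega⟩

theorem radius_even {n : ℕ} (hn : 1 ≤ n) {P : Finset (Fin n → ZMod 2)}
    (hP : ∀ u, u ∈ P ↔ ∑ i, u i = 0) :
    Finset.univ.inf' Finset.univ_nonempty
      (fun x : Fin n → ZMod 2 => P.sup (fun y => hammingDist x y)) = n - 1 := by
  let o : Fin n := ⟨0, hn⟩
  apply radius_eq
  · -- The only vector at distance `n` from `1ⁿ + e_0` is `e_0`, which has odd weight.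
    refine ⟨Pi.single o 1 + 1, fun y hy => ?_⟩
    have hle := hammingDist_le (Pi.single o 1 + 1) y
    suffices h : hammingDist (Pi.single o 1 + 1) y ≠ n by omega
    intro h
    have hall : ∀ i, (Pi.single o 1 + 1 : Fin n → ZMod 2) i ≠ y i := by
      have h' : (Finset.univ.filter
          fun i => (Pi.single o 1 + 1 : Fin n → ZMod 2) i ≠ y i).card =
          (Finset.univ : Finset (Fin n)).card := by
        rw [Finset.card_univ, Fintype.card_fin]
        exact h
      have h2 := Finset.card_filter_eq_iff.1 h'
      exact fun i => h2 i (Finset.mem_univ i)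
    have hy' : y = Pi.single o 1 := by
      funext i
      have h2 : ∀ a b : ZMod 2, a + 1 ≠ b → b = a := by decide
      exact h2 _ _ (hall i)
    have := (hP y).1 hy
    rw [hy'] at this
    simp at this
  · intro x
    -- Either the complement of `x` is even, or it becomes so after flipping one bit.
    have hd := hammingDist_add_one x
    rcases zmod_two_cases (∑ i, (x + 1) i) with h | h
    · exact ⟨x + 1, (hP _).2 h, by omega⟩
    · refine ⟨x + 1 + Pi.single o 1, (hP _).2 ?_, ?_⟩
      · have hs : ∑ i, (x + 1 + Pi.single o 1 : Fin n → ZMod 2) i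
            = ∑ i, (x + 1) i + ∑ i, (Pi.single o 1 : Fin n → ZMod 2) i :=
          Finset.sum_add_distrib
        rw [hs, h]
        simp [CharTwo.add_self_eq_zero]
      · have ht := hammingDist_triangle x (x + 1 + Pi.single o 1) (x + 1)
        have h1 : hammingDist (x + 1 + Pi.single o 1) (x + 1) ≤ 1 := by
          rw [hammingDist]
          refine Finset.card_le_one.2 fun a ha b hb => ?_
          simp [Pi.single_apply] at ha hb
          rw [ha, hb]
        omega

/-- (Tetrachotomy for symmetric functions.) Let `f : {0,1}^n → {0,1}` be
symmetric and let `r(f) := min_x max_{y ∈ S_f^⊥} d(x,y)` (which, by the characterisation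
theorem, equals the nonadaptive exact quantum query complexity of `f`; here `P = S_f^⊥`).
Then exactly one of the following holds:
(1) `f` is constant and `r(f) = 0`;
(2) `f` is PARITY or its negation and `r(f) = ⌈n/2⌉`;
(3) `f` satisfies `f(x) = f(x̄)` for all `x` but is not constant, PARITY or its negation,
    and `r(f) = n − 1`;
(4) `f` is none of the above and `r(f) = n`. -/
theorem nonadaptive_tetrachotomy (n : ℕ) (hn : 1 ≤ n)
    (f : (Fin n → ZMod 2) → ZMod 2)
    (hsym : ∀ x y : Fin n → ZMod 2, hammingNorm x = hammingNorm y → f x = f y)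
    (P : Finset (Fin n → ZMod 2))
    (hP : ∀ u : Fin n → ZMod 2, u ∈ P ↔
      ∀ z : Fin n → ZMod 2, (∀ x, f (x + z) = f x) → ∑ i, u i * z i = 0)
    (r : ℕ)
    (hr : r = Finset.univ.inf' Finset.univ_nonempty
      (fun x : Fin n → ZMod 2 => P.sup (fun y => hammingDist x y))) :
    let IsConst := ∃ c : ZMod 2, ∀ x, f x = c
    let IsParityOrNeg := (∀ x, f x = (hammingNorm x : ZMod 2)) ∨
      (∀ x, f x = (hammingNorm x : ZMod 2) + 1)
    let ComplInv := ∀ x : Fin n → ZMod 2, f (fun i => x i + 1) = f x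
    let C1 := IsConst ∧ r = 0
    let C2 := IsParityOrNeg ∧ r = (n + 1) / 2
    let C3 := ComplInv ∧ ¬IsConst ∧ ¬IsParityOrNeg ∧ r = n - 1
    let C4 := ¬IsConst ∧ ¬IsParityOrNeg ∧ ¬ComplInv ∧ r = n
    (C1 ∧ ¬C2 ∧ ¬C3 ∧ ¬C4) ∨ (¬C1 ∧ C2 ∧ ¬C3 ∧ ¬C4) ∨
    (¬C1 ∧ ¬C2 ∧ C3 ∧ ¬C4) ∨ (¬C1 ∧ ¬C2 ∧ ¬C3 ∧ C4) := by
  intro IsConst IsParityOrNeg ComplInv C1 C2 C3 C4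
  let o : Fin n := ⟨0, hn⟩
  have hdisj : IsConst → ¬ IsParityOrNeg := by
    rintro ⟨c, hc⟩ h
    have hne : f 0 ≠ f (Pi.single o 1) := by
      rcases h with h | h
      · rw [h, h, hammingNorm_cast, hammingNorm_cast]
        simp
      · rw [h, h, hammingNorm_cast, hammingNorm_cast]
        simp
    exact hne (by rw [hc, hc])
  have h1 : IsConst → r = 0 := by
    rintro ⟨c, hc⟩
    rw [hr]
    refine radius_eq ⟨0, fun y hy => ?_⟩ fun x => ⟨0, (hP 0).2 (by simp), Nat.zero_le _⟩
    have hy0 : y = 0 := by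
      funext i
      simpa [Pi.single_apply] using (hP y).1 hy (Pi.single i 1) (by simp [hc])
    simp [hy0]
  have h2 : IsParityOrNeg → r = (n + 1) / 2 := by
    intro h
    have hiff : ∀ z : Fin n → ZMod 2, (∀ x, f (x + z) = f x) ↔ ∑ i, z i = 0 := by
      intro z
      rcases h with h | h <;>
        simp [h, hammingNorm_cast, Finset.sum_add_distrib]
    rw [hr]
    refine radius_zero_one fun u => ⟨fun hu => ?_, ?_⟩
    · have hc : ∀ i, u i = u o := by
        intro i
        have := (hP u).1 hu (Pi.single i 1 + Pi.single o 1) ((hiff _).2 (by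
          simp [Finset.sum_add_distrib, CharTwo.add_self_eq_zero]))
        simp [mul_add, Finset.sum_add_distrib, Pi.single_apply] at this
        exact CharTwo.add_eq_zero.1 this
      rcases zmod_two_cases (u o) with h0 | h0
      · exact Or.inl (funext fun i => (hc i).trans h0)
      · exact Or.inr (funext fun i => (hc i).trans h0)
    · rintro (rfl | rfl)
      · exact (hP 0).2 (by simp)
      · exact (hP 1).2 fun z hz => by simpa using (hiff z).1 hz
  have hS : ¬ IsConst → ¬ IsParityOrNeg → ∀ z : Fin n → ZMod 2,
      (∀ x, f (x + z) = f x) → z = 0 ∨ z = 1 := by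
    intro hc hp z hz
    by_contra! hcon
    obtain ⟨a, ha⟩ := Function.ne_iff.1 hcon.1
    obtain ⟨b, hb⟩ := Function.ne_iff.1 hcon.2
    have ha' : z a = 1 := (zmod_two_cases (z a)).resolve_left ha
    have hb' : z b = 0 := (zmod_two_cases (z b)).resolve_right hb
    exact (const_or_parity hn (single_add_single_mem hsym
      (mem_periodSpace.2 hz) ha' hb')).elim hc hp
  have h3 : ComplInv → ¬ IsConst → ¬ IsParityOrNeg → r = n - 1 := by
    intro hi hc hp
    rw [hr]
    refine radius_even hn fun u => ⟨fun hu => ?_, fun hu => (hP u).2 fun z hz => ?_⟩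
    · simpa using (hP u).1 hu 1 hi
    · rcases hS hc hp z hz with rfl | rfl
      · simp
      · simpa using hu
  have h4 : ¬ IsConst → ¬ IsParityOrNeg → ¬ ComplInv → r = n := by
    intro hc hp hi
    rw [hr]
    refine radius_eq ⟨0, fun y _ => hammingDist_le 0 y⟩ fun x =>
      ⟨x + 1, (hP _).2 fun z hz => ?_, (hammingDist_add_one x).ge⟩
    rcases hS hc hp z hz with rfl | rfl
    · simp
    · exact absurd hz hi
  by_cases hc : IsConst
  · exact Or.inl ⟨⟨hc, h1 hc⟩, fun h => hdisj hc h.1, fun h => h.2.1 hc, fun h => h.1 hc⟩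
  by_cases hp : IsParityOrNeg
  · exact Or.inr (Or.inl ⟨fun h => hc h.1, ⟨hp, h2 hp⟩, fun h => h.2.2.1 hp, fun h => h.2.1 hp⟩)
  by_cases hi : ComplInv
  · exact Or.inr (Or.inr (Or.inl ⟨fun h => hc h.1, fun h => hp h.1, ⟨hi, hc, hp, h3 hi hc hp⟩,
      fun h => h.2.2.1 hi⟩))
  · exact Or.inr (Or.inr (Or.inr ⟨fun h => hc h.1, fun h => hp h.1, fun h => hi h.1,
      ⟨hc, hp, hi, h4 hc hp hi⟩⟩))
end
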